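/- arXiv:2104.04444 — 2 statements merged into one kernel-verified Lean document; each statement's English description precedes it below -/
import Mathlib

section
/- Let r > t > 0 and let f₁, f₂ : ℝ → ℝ be 1-Lipschitz functions with f₁(x) ≤ f₂(x) for all x ∈ [−r, r]. Then (HL_t f₁)(x) ≤ (HL_t f₂)(x) for all x ∈ [−(r−t), r−t]. -/
/-- The (shifted) parabola `p(t,x)`: for `t > 0`, `p(t,x) = -t/2 - x²/(2t)` when `|x| ≤ t`
and `p(t,x) = -|x|` otherwise; also `p(0,x) = -|x|`. -/
noncomputable def parab (t x : ℝ) : ℝ :=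
  if 0 < t ∧ |x| ≤ t then -t / 2 - x ^ 2 / (2 * t) else -|x|

/-- The forward Hopf–Lax evolution `(HL_t f)(x) = sup_{x̂} ( p(t, x - x̂) + f(x̂) )`. -/
noncomputable def hopfLax (t : ℝ) (f : ℝ → ℝ) (x : ℝ) : ℝ :=
  ⨆ y : ℝ, (parab t (x - y) + f y)

/-!
The supremum defining `(HL_t f)(x)` only sees the ball of radius `t` around `x`. Indeed
`p(t, z) ≤ -|z|` everywhere, while `p(t, z) ≥ -t` for `|z| ≤ t`. Moving a point `y` outside the ball
to the nearest point of the ball therefore gains at least `|x - y| - t` in the parabola, which is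
exactly the length of the move and so at least as much as the `1`-Lipschitz function `f` can lose.
-/

lemma parab_le_neg_abs (t z : ℝ) : parab t z ≤ -|z| := by
  unfold parab
  split_ifs with h
  · have ht : 0 < t := h.1
    have tangent_gap : -t / 2 - z ^ 2 / (2 * t) = -|z| - (|z| - t) ^ 2 / (2 * t) := by
      rw [← sq_abs z]
      field_simp
      ring
    rw [tangent_gap]
    exact sub_le_self _ (by positivity)
  · exact le_rfl

lemma neg_le_parab {t z : ℝ} (hz : |z| ≤ t) : -t ≤ parab t z := by
  unfold parab
  split_ifs with h
  · have hsq : z ^ 2 / (2 * t) ≤ t / 2 := by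
      rw [div_le_div_iff₀ (mul_pos two_pos h.1) two_pos]
      nlinarith [sq_le_sq' (abs_le.mp hz).1 (abs_le.mp hz).2]
    linarith
  · exact neg_le_neg hz

lemma bddAbove_range_parab_add {f : ℝ → ℝ} (hf : LipschitzWith 1 f) (t x : ℝ) :
    BddAbove (Set.range fun y => parab t (x - y) + f y) := by
  refine ⟨f x, Set.forall_mem_range.mpr fun y => ?_⟩
  have hlip : f y ≤ f x + |x - y| := by
    simpa [Real.dist_eq, abs_sub_comm] using hf.le_add_mul y x
  linarith [parab_le_neg_abs t (x - y)]

lemma exists_mem_closedBall_parab_add_le {f : ℝ → ℝ} {t : ℝ} (hf : LipschitzWith 1 f)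
    (ht : 0 ≤ t) (x y : ℝ) :
    ∃ z ∈ Metric.closedBall x t, parab t (x - y) + f y ≤ parab t (x - z) + f z := by
  obtain hy | hy := le_total (dist x y) t
  · exact ⟨y, Metric.mem_closedBall'.mpr hy, le_rfl⟩
  obtain ⟨z, hxz, hzy⟩ : ∃ z, dist x z ≤ t ∧ dist z y ≤ dist x y - t :=
    exists_dist_le_le ht (sub_nonneg.mpr hy) (sub_add_cancel _ _).ge
  refine ⟨z, Metric.mem_closedBall'.mpr hxz, ?_⟩
  have hlip : f y ≤ f z + dist z y := by
    simpa [dist_comm] using hf.le_add_mul y z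
  calc parab t (x - y) + f y
      ≤ -dist x y + (f z + dist z y) := add_le_add (parab_le_neg_abs t (x - y)) hlip
    _ ≤ -t + f z := by linarith
    _ ≤ parab t (x - z) + f z := by gcongr; exact neg_le_parab hxz

theorem hopfLax_comparison_general {f₁ f₂ : ℝ → ℝ} {t x : ℝ} (ht : 0 ≤ t)
    (h₁ : LipschitzWith 1 f₁)
    (h₂ : BddAbove (Set.range fun y => parab t (x - y) + f₂ y))
    (hle : ∀ y ∈ Metric.closedBall x t, f₁ y ≤ f₂ y) :
    hopfLax t f₁ x ≤ hopfLax t f₂ x := by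
  refine ciSup_le fun y => ?_
  obtain ⟨z, hz, hyz⟩ := exists_mem_closedBall_parab_add_le h₁ ht x y
  calc parab t (x - y) + f₁ y
      ≤ parab t (x - z) + f₁ z := hyz
    _ ≤ parab t (x - z) + f₂ z := by gcongr; exact hle z hz
    _ ≤ hopfLax t f₂ x := le_ciSup h₂ z

/-- Localization/comparison property of the Hopf–Lax evolution: if `r > t > 0` and the
`1`-Lipschitz functions `f₁ ≤ f₂` on `[-r, r]`, then `HL_t f₁ ≤ HL_t f₂` on
`[-(r-t), r-t]`. -/
theorem hopfLax_comparison
    (r t : ℝ) (ht : 0 < t) (htr : t < r) (f₁ f₂ : ℝ → ℝ)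
    (h₁ : LipschitzWith 1 f₁) (h₂ : LipschitzWith 1 f₂)
    (hle : ∀ x ∈ Set.Icc (-r) r, f₁ x ≤ f₂ x) :
    ∀ x ∈ Set.Icc (-(r - t)) (r - t), hopfLax t f₁ x ≤ hopfLax t f₂ x := by
  intro x hx
  have hball : Metric.closedBall x t ⊆ Set.Icc (-r) r := by
    rw [Real.closedBall_eq_Icc]
    exact Set.Icc_subset_Icc (by linarith [hx.1]) (by linarith [hx.2])
  exact hopfLax_comparison_general ht.le h₁ (bddAbove_range_parab_add h₂ t x)
    fun y hy => hle y (hball hy)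
end

section
/- Let s > 0 and d > 0, and set z⋆ := 2d/(s + d), which lies in the open interval (0, 2). Define Φ(θ) := s·Log(2 − z⋆e^{iθ}) + d·Log(z⋆e^{iθ}) for θ ∈ (−π, π), where Log is the principal complex logarithm. Then: Φ′(0) = 0; Φ″(0) is a strictly positive real number; and the function θ ↦ Re Φ(θ) extends continuously to [−π, π], is an even function of θ, and is strictly increasing on [0, π]. -/
open Real

/-!
On a circle around the origin `|z|` is constant, so `Re (s log (2 - z) + d log z)` depends on
`z = r e^{iθ}` only through `log |2 - z|`, and by the law of cosines `|2 - r e^{iθ}|` increases as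
`θ` goes from `0` to `π`. At a critical point `z` of a holomorphic `f`, the second derivative of
`f` in `θ` is `-z² f''(z)`, and for the exponent `f''(z⋆) < 0`: its maximum along the real axis is
a minimum along the circle.
-/

section Circle

theorem norm_sub_circleMap_sq (a r θ : ℝ) :
    ‖(a : ℂ) - circleMap 0 r θ‖ ^ 2 = a ^ 2 + r ^ 2 - 2 * a * r * cos θ := by
  rw [norm_sub_sq_real, norm_circleMap_zero, Complex.norm_real, norm_eq_abs, sq_abs, sq_abs,
    Complex.inner, Complex.conj_ofReal, Complex.re_mul_ofReal, circleMap_zero,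
    Complex.re_ofReal_mul, Complex.exp_ofReal_mul_I_re]
  ring

theorem norm_sub_circleMap_neg (a r θ : ℝ) :
    ‖(a : ℂ) - circleMap 0 r (-θ)‖ = ‖(a : ℂ) - circleMap 0 r θ‖ := by
  rw [← sq_eq_sq₀ (norm_nonneg _) (norm_nonneg _), norm_sub_circleMap_sq, norm_sub_circleMap_sq,
    cos_neg]

theorem strictMonoOn_norm_sub_circleMap {a r : ℝ} (har : 0 < a * r) :
    StrictMonoOn (fun θ => ‖(a : ℂ) - circleMap 0 r θ‖) (Set.Icc 0 π) := by
  intro θ hθ φ hφ hθφ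
  have hcos : cos φ < cos θ := strictAntiOn_cos hθ hφ hθφ
  rw [← sq_lt_sq₀ (norm_nonneg _) (norm_nonneg _), norm_sub_circleMap_sq, norm_sub_circleMap_sq]
  linarith [mul_lt_mul_of_pos_left hcos har]

theorem sub_circleMap_zero_ne_zero {w : ℂ} {r : ℝ} (hr : |r| ≠ ‖w‖) (θ : ℝ) :
    w - circleMap 0 r θ ≠ 0 := by
  intro h
  rw [sub_eq_zero.mp h, norm_circleMap_zero] at hr
  exact hr rfl

variable {f : ℂ → ℂ} {c : ℂ} {R θ : ℝ}

theorem deriv_comp_circleMap (hf : DifferentiableAt ℂ f (circleMap c R θ)) :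
    deriv (fun t => f (circleMap c R t)) θ =
      deriv f (circleMap c R θ) * (circleMap 0 R θ * Complex.I) :=
  (hf.hasDerivAt.comp θ (hasDerivAt_circleMap c R θ)).deriv

theorem deriv_deriv_comp_circleMap (hf : AnalyticAt ℂ f (circleMap c R θ)) :
    deriv (deriv fun t => f (circleMap c R t)) θ =
      -(deriv (deriv f) (circleMap c R θ) * circleMap 0 R θ ^ 2 +
        deriv f (circleMap c R θ) * circleMap 0 R θ) := by
  have hderiv : deriv (fun t => f (circleMap c R t)) =ᶠ[nhds θ]
      fun t => deriv f (circleMap c R t) * (circleMap 0 R t * Complex.I) := by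
    filter_upwards [(continuous_circleMap c R).continuousAt.eventually hf.eventually_analyticAt]
      with t ht using deriv_comp_circleMap ht.differentiableAt
  have hderiv₂ := (hf.deriv.differentiableAt.hasDerivAt.comp θ (hasDerivAt_circleMap c R θ)).mul
    ((hasDerivAt_circleMap 0 R θ).mul_const Complex.I)
  rw [hderiv.deriv_eq]
  refine hderiv₂.deriv.trans ?_
  simp only [Function.comp_apply]
  linear_combination (deriv (deriv f) (circleMap c R θ) * circleMap 0 R θ ^ 2 +
    deriv f (circleMap c R θ) * circleMap 0 R θ) * Complex.I_sq

end Circle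

/-- The exponent `Φ^rw(z; s, d) = s log (2 - z) + d log z` of the random-walk kernel, with the
principal branch of both logarithms. -/
noncomputable def rwExponent (s d : ℝ) (z : ℂ) : ℂ :=
  s * Complex.log (2 - z) + d * Complex.log z

/-- The point `z⋆ = 2d / (s + d)`, the critical point of `rwExponent s d` in `(0, 2)` when `s` and
`d` are positive; it is the radius of the steepest-descent circle. -/
noncomputable def rwCriticalPoint (s d : ℝ) : ℝ :=
  2 * d / (s + d)

namespace rwExponent

section Derivatives

variable (s d : ℝ) {z : ℂ}

protected theorem hasDerivAt (hz : z ∈ Complex.slitPlane) (hz' : 2 - z ∈ Complex.slitPlane) :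
    HasDerivAt (rwExponent s d) (d / z - s / (2 - z)) z := by
  refine (((((hasDerivAt_id z).const_sub 2).clog hz').const_mul (s : ℂ)).add
    ((Complex.hasDerivAt_log hz).const_mul (d : ℂ))).congr_deriv ?_
  simp only [id_eq]
  ring

protected theorem analyticAt (hz : z ∈ Complex.slitPlane) (hz' : 2 - z ∈ Complex.slitPlane) :
    AnalyticAt ℂ (rwExponent s d) z :=
  (analyticAt_const.mul ((analyticAt_const.sub analyticAt_id).clog hz')).add
    (analyticAt_const.mul (analyticAt_id.clog hz))

theorem deriv_deriv (hz : z ∈ Complex.slitPlane) (hz' : 2 - z ∈ Complex.slitPlane) :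
    deriv (deriv (rwExponent s d)) z = -(d / z ^ 2 + s / (2 - z) ^ 2) := by
  have hderiv : deriv (rwExponent s d) =ᶠ[nhds z] fun w => d / w - s / (2 - w) := by
    filter_upwards [Complex.isOpen_slitPlane.mem_nhds hz,
      (continuous_sub_left (2 : ℂ)).continuousAt.eventually
        (Complex.isOpen_slitPlane.mem_nhds hz')]
      with w hw hw' using (rwExponent.hasDerivAt s d hw hw').deriv
  have hderiv₂ := ((hasDerivAt_const z (d : ℂ)).div (hasDerivAt_id z)
    (Complex.slitPlane_ne_zero hz)).sub ((hasDerivAt_const z (s : ℂ)).div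
      ((hasDerivAt_id z).const_sub 2) (Complex.slitPlane_ne_zero hz'))
  rw [hderiv.deriv_eq]
  refine hderiv₂.deriv.trans ?_
  simp only [id_eq]
  ring

end Derivatives

section RealPart

variable (s d r : ℝ)

theorem re_circleMap (θ : ℝ) :
    (rwExponent s d (circleMap 0 r θ)).re = s * log ‖2 - circleMap 0 r θ‖ + d * log r := by
  rw [rwExponent, Complex.add_re, Complex.re_ofReal_mul, Complex.re_ofReal_mul, Complex.log_re,
    Complex.log_re, norm_circleMap_zero, log_abs]

theorem re_circleMap_neg (θ : ℝ) :
    (rwExponent s d (circleMap 0 r (-θ))).re = (rwExponent s d (circleMap 0 r θ)).re := by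
  have hnorm := norm_sub_circleMap_neg 2 r θ
  push_cast at hnorm
  rw [re_circleMap, re_circleMap, hnorm]

variable {r}

theorem continuous_re_circleMap (hr : |r| ≠ 2) :
    Continuous fun θ => (rwExponent s d (circleMap 0 r θ)).re := by
  have hne (θ : ℝ) : ‖2 - circleMap 0 r θ‖ ≠ 0 :=
    norm_ne_zero_iff.mpr (sub_circleMap_zero_ne_zero (by rwa [Complex.norm_two]) θ)
  simp only [re_circleMap]
  exact (((continuous_const.sub (continuous_circleMap 0 r)).norm.log hne).const_mul s).add_const _

variable {s}

theorem strictMonoOn_re_circleMap (hs : 0 < s) (hr₀ : 0 < r) (hr₂ : r ≠ 2) :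
    StrictMonoOn (fun θ => (rwExponent s d (circleMap 0 r θ)).re) (Set.Icc 0 π) := by
  intro θ hθ φ hφ hθφ
  have hpos : 0 < ‖2 - circleMap 0 r θ‖ :=
    norm_pos_iff.mpr
      (sub_circleMap_zero_ne_zero (by rwa [Complex.norm_two, abs_of_pos hr₀]) θ)
  have hnorm : ‖2 - circleMap 0 r θ‖ < ‖2 - circleMap 0 r φ‖ :=
    mod_cast strictMonoOn_norm_sub_circleMap (mul_pos two_pos hr₀) hθ hφ hθφ
  simp only [re_circleMap]
  gcongr

end RealPart

end rwExponent

section CriticalPoint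

variable {s d : ℝ}

theorem rwCriticalPoint_mem_Ioo (hs : 0 < s) (hd : 0 < d) :
    rwCriticalPoint s d ∈ Set.Ioo 0 2 := by
  refine ⟨by unfold rwCriticalPoint; positivity, ?_⟩
  rw [rwCriticalPoint, div_lt_iff₀ (add_pos hs hd)]
  linarith

theorem rwCriticalPoint_mem_slitPlane (hs : 0 < s) (hd : 0 < d) :
    (rwCriticalPoint s d : ℂ) ∈ Complex.slitPlane :=
  Complex.ofReal_mem_slitPlane.mpr (rwCriticalPoint_mem_Ioo hs hd).1

theorem two_sub_rwCriticalPoint_mem_slitPlane (hs : 0 < s) (hd : 0 < d) :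
    2 - (rwCriticalPoint s d : ℂ) ∈ Complex.slitPlane :=
  mod_cast Complex.ofReal_mem_slitPlane.mpr (sub_pos.mpr (rwCriticalPoint_mem_Ioo hs hd).2)

theorem deriv_rwExponent_rwCriticalPoint (hs : 0 < s) (hd : 0 < d) :
    deriv (rwExponent s d) (rwCriticalPoint s d) = 0 := by
  have hz := rwCriticalPoint_mem_slitPlane hs hd
  have hz' := two_sub_rwCriticalPoint_mem_slitPlane hs hd
  have hsum : (rwCriticalPoint s d : ℂ) * (s + d) = 2 * d :=
    mod_cast div_mul_cancel₀ (2 * d) (add_pos hs hd).ne'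
  rw [(rwExponent.hasDerivAt s d hz hz').deriv, sub_eq_zero,
    div_eq_div_iff (Complex.slitPlane_ne_zero hz) (Complex.slitPlane_ne_zero hz')]
  linear_combination -hsum

theorem deriv_rwExponent_circleMap_rwCriticalPoint (hs : 0 < s) (hd : 0 < d) :
    deriv (fun θ => rwExponent s d (circleMap 0 (rwCriticalPoint s d) θ)) 0 = 0 := by
  have hz : circleMap 0 (rwCriticalPoint s d) 0 = rwCriticalPoint s d := by simp [circleMap]
  have hf := rwExponent.analyticAt s d (rwCriticalPoint_mem_slitPlane hs hd)
    (two_sub_rwCriticalPoint_mem_slitPlane hs hd)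
  rw [deriv_comp_circleMap (hz ▸ hf.differentiableAt), hz, deriv_rwExponent_rwCriticalPoint hs hd,
    zero_mul]

theorem deriv_deriv_rwExponent_circleMap_rwCriticalPoint (hs : 0 < s) (hd : 0 < d) :
    deriv (deriv fun θ => rwExponent s d (circleMap 0 (rwCriticalPoint s d) θ)) 0 =
      ((d + s * (rwCriticalPoint s d / (2 - rwCriticalPoint s d)) ^ 2 : ℝ) : ℂ) := by
  have hz : circleMap 0 (rwCriticalPoint s d) 0 = rwCriticalPoint s d := by simp [circleMap]
  have hslit := rwCriticalPoint_mem_slitPlane hs hd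
  have hslit' := two_sub_rwCriticalPoint_mem_slitPlane hs hd
  have hz₀ := Complex.slitPlane_ne_zero hslit
  rw [deriv_deriv_comp_circleMap (hz ▸ rwExponent.analyticAt s d hslit hslit'), hz,
    deriv_rwExponent_rwCriticalPoint hs hd, rwExponent.deriv_deriv s d hslit hslit']
  push_cast
  field_simp
  ring

end CriticalPoint

/-- Lemma C.1 (l.steep), random-walk case: the exponent
`Φ(θ) = s·Log(2 − z⋆e^{iθ}) + d·Log(z⋆e^{iθ})` with `z⋆ = 2d/(s+d)` has a critical point
at `θ = 0` with positive second derivative, and `Re Φ` is even, extends continuously to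
`[−π, π]`, and is strictly increasing on `[0, π]`. -/
theorem steepest_descent_rw (s d : ℝ) (hs : 0 < s) (hd : 0 < d) :
    let z : ℝ := 2 * d / (s + d)
    let Φ : ℝ → ℂ := fun θ =>
      (s : ℂ) * Complex.log (2 - (z : ℂ) * Complex.exp (θ * Complex.I)) +
        (d : ℂ) * Complex.log ((z : ℂ) * Complex.exp (θ * Complex.I))
    z ∈ Set.Ioo (0 : ℝ) 2 ∧
      deriv Φ 0 = 0 ∧
      ((deriv (deriv Φ) 0).im = 0 ∧ 0 < (deriv (deriv Φ) 0).re) ∧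
      ContinuousOn (fun θ => (Φ θ).re) (Set.Icc (-π) π) ∧
      (∀ θ, (Φ (-θ)).re = (Φ θ).re) ∧
      StrictMonoOn (fun θ => (Φ θ).re) (Set.Icc 0 π) := by
  intro z Φ
  have hz : z ∈ Set.Ioo 0 2 := rwCriticalPoint_mem_Ioo hs hd
  have hΦ : Φ = fun θ => rwExponent s d (circleMap 0 (rwCriticalPoint s d) θ) := by
    funext θ
    rw [circleMap_zero, rwExponent, rwCriticalPoint]
  rw [hΦ]
  refine ⟨hz, deriv_rwExponent_circleMap_rwCriticalPoint hs hd, ?_,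
    (rwExponent.continuous_re_circleMap s d ?_).continuousOn,
    rwExponent.re_circleMap_neg s d _, rwExponent.strictMonoOn_re_circleMap d hs hz.1 hz.2.ne⟩
  · rw [deriv_deriv_rwExponent_circleMap_rwCriticalPoint hs hd, Complex.ofReal_im,
      Complex.ofReal_re]
    exact ⟨rfl, by positivity⟩
  · exact (abs_of_pos hz.1).trans_ne hz.2.ne
end
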